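/- Let R be a commutative Noetherian local ring and X a resolving subcategory of finitely generated R-modules. Then for every prime ideal p of R, the additive closure add_{R_p}(X_p) of the localized subcategory is a resolving subcategory of finitely generated R_p-modules: it contains R_p and is closed under direct summands, extensions, and syzygies. -/

import Mathlib

open CategoryTheory IsLocalRing

noncomputable section

/-- `K` is (isomorphic to) the first syzygy of `M`, i.e. the kernel of a
minimal free cover of `M`. -/
def IsSyzygyOf (R : Type) [CommRing R] [IsLocalRing R]
    (K M : ModuleCat.{0} R) : Prop :=
  ∃ (n : ℕ) (f : (Fin n → R) →ₗ[R] M),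
    Function.Surjective f ∧
    LinearMap.ker f ≤ (maximalIdeal R) • (⊤ : Submodule R (Fin n → R)) ∧
    Nonempty (K ≃ₗ[R] LinearMap.ker f)

/-- The additive closure `add_{R_p}(X_p)` of the localization at `p` of a
subcategory `S`: direct summands of finite direct sums of localizations of
modules in `S`. -/
def addLocalized (R : Type) [CommRing R] (p : Ideal R) [p.IsPrime]
    (S : Set (ModuleCat.{0} R)) :
    Set (ModuleCat.{0} (Localization p.primeCompl)) :=
  { N | ∃ (k : ℕ) (Xs : Fin k → ModuleCat.{0} R), (∀ i, Xs i ∈ S) ∧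
      ∃ L : ModuleCat.{0} (Localization p.primeCompl),
        Nonempty ((Π i, LocalizedModule p.primeCompl ↥(Xs i))
          ≃ₗ[Localization p.primeCompl] (↥N × ↥L)) }

lemma ext_lift_aux {R : Type} [CommRing R] [IsNoetherianRing R] (M : Submonoid R)
    {X Y X' Y' B : Type} [AddCommGroup X] [Module R X] [AddCommGroup Y] [Module R Y]
    [AddCommGroup X'] [Module R X'] [AddCommGroup Y'] [Module R Y']
    [AddCommGroup B] [Module R B] [Module.Finite R Y]
    (lX : X →ₗ[R] X') [IsLocalizedModule M lX]
    (lY : Y →ₗ[R] Y') [IsLocalizedModule M lY]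
    (hB : ∀ x : M, IsUnit (algebraMap R (Module.End R B) x))
    (f : X' →ₗ[R] B) (g : B →ₗ[R] Y') (hf : Function.Injective f)
    (hg : Function.Surjective g) (hfg : Function.Exact f g) :
    ∃ (Z : Type) (_ : AddCommGroup Z) (_ : Module R Z)
      (i : X →ₗ[R] Z) (q : Z →ₗ[R] Y) (h : Z →ₗ[R] B),
      Function.Injective i ∧ Function.Surjective q ∧
      LinearMap.range i = LinearMap.ker q ∧ IsLocalizedModule M h := by
  obtain ⟨n, π, hπ⟩ := Module.Finite.exists_fin' R Y
  obtain ⟨φ, hφ⟩ := Module.projective_lifting_property g (lY ∘ₗ π) hg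
  have hφ' : ∀ v, g (φ v) = lY (π v) := fun v => LinearMap.congr_fun hφ v
  let e := LinearEquiv.ofInjective f hf
  have hmem : ∀ k : LinearMap.ker π, φ k ∈ LinearMap.range f := by
    intro k
    have : g (φ k) = 0 := by rw [hφ', LinearMap.mem_ker.1 k.2, map_zero]
    exact (hfg _).1 this
  let ψ : LinearMap.ker π →ₗ[R] X' :=
    e.symm.toLinearMap ∘ₗ (φ ∘ₗ (LinearMap.ker π).subtype).codRestrict _ hmem
  have hψ : ∀ k : LinearMap.ker π, f (ψ k) = φ k := by
    intro k
    have : (e (ψ k) : B) = φ k := by simp [ψ]; rfl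
    exact this
  have : Module.FinitePresentation R (LinearMap.ker π) :=
    Module.finitePresentation_of_finite R _
  obtain ⟨α, s, hα⟩ :=
    Module.FinitePresentation.exists_lift_of_isLocalizedModule M lX ψ
  have hα' : ∀ k, lX (α k) = (s : R) • ψ k := fun k => LinearMap.congr_fun hα k
  let N : Submodule R (X × (Fin n → R)) :=
    LinearMap.range (α.prod (-(LinearMap.ker π).subtype))
  have hN : ∀ x v, (x, v) ∈ N ↔ ∃ k : LinearMap.ker π, α k = x ∧ -(k : Fin n → R) = v := by
    intro x v
    constructor
    · rintro ⟨k, hk⟩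
      exact ⟨k, congrArg Prod.fst hk, congrArg Prod.snd hk⟩
    · rintro ⟨k, rfl, rfl⟩
      exact ⟨k, rfl⟩
  let h₀ : X × (Fin n → R) →ₗ[R] B := (f ∘ₗ lX).coprod ((s : R) • φ)
  let q₀ : X × (Fin n → R) →ₗ[R] Y := π ∘ₗ LinearMap.snd R _ _
  have hh₀ : N ≤ LinearMap.ker h₀ := by
    rintro ⟨x, v⟩ hx
    obtain ⟨k, rfl, rfl⟩ := (hN _ _).1 hx
    simp [h₀, hα', hψ]
  have hq₀ : N ≤ LinearMap.ker q₀ := by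
    rintro ⟨x, v⟩ hx
    obtain ⟨k, rfl, rfl⟩ := (hN _ _).1 hx
    simp [q₀]
  let h : (X × (Fin n → R)) ⧸ N →ₗ[R] B := N.liftQ h₀ hh₀
  have hh : ∀ x v, h (N.mkQ (x, v)) = f (lX x) + (s : R) • φ v := by
    intro x v; simp [h, h₀]
  have hunit : ∀ (c : M) (b : B), (c : R) • b = 0 → b = 0 := by
    intro c b hb
    have := (Module.End.isUnit_iff _).1 (hB c)
    apply this.1
    simpa using hb
  have hunitY : ∀ (c : M) (b : Y'), (c : R) • b = 0 → b = 0 := by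
    intro c b hb
    have := (Module.End.isUnit_iff _).1 (IsLocalizedModule.map_units lY c)
    apply this.1
    simpa using hb
  refine ⟨(X × (Fin n → R)) ⧸ N, inferInstance, inferInstance,
    N.mkQ ∘ₗ LinearMap.inl R _ _, N.liftQ q₀ hq₀, h, ?_, ?_, ?_, ?_⟩
  · rw [injective_iff_map_eq_zero]
    intro x hx
    have : (x, (0 : Fin n → R)) ∈ N := by simpa using hx
    obtain ⟨k, rfl, hk⟩ := (hN _ _).1 this
    have : k = 0 := by
      ext1
      simpa using hk
    simp [this]
  · intro y
    obtain ⟨v, rfl⟩ := hπ y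
    exact ⟨N.mkQ (0, v), by simp [q₀]⟩
  · ext z
    obtain ⟨⟨x, v⟩, rfl⟩ := N.mkQ_surjective z
    constructor
    · rintro ⟨x', hx'⟩
      rw [← hx']
      simp [q₀]
    · intro hz
      have hz : π v = 0 := by simpa [q₀] using hz
      refine ⟨x + α ⟨v, hz⟩, ?_⟩
      simp only [LinearMap.comp_apply]
      rw [← sub_eq_zero, ← map_sub, Submodule.mkQ_apply, Submodule.Quotient.mk_eq_zero]
      have : (LinearMap.inl R X (Fin n → R)) (x + α ⟨v, hz⟩) - (x, v)
        = (α ⟨v, hz⟩, -v) := by simp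
      rw [this]
      exact (hN _ _).2 ⟨⟨v, hz⟩, rfl, rfl⟩
  · refine ⟨hB, ?_, ?_⟩
    · intro b
      obtain ⟨⟨y, t⟩, hy⟩ := IsLocalizedModule.surj M lY (g b)
      obtain ⟨v, rfl⟩ := hπ y
      have hy : (t : R) • g b = lY (π v) := hy
      have : g ((s : R) • (t : R) • b - (s : R) • φ v) = 0 := by
        rw [map_sub, map_smul, map_smul, map_smul, hφ', hy, sub_self]
      obtain ⟨x', hx'⟩ := (hfg _).1 this
      obtain ⟨⟨x, t'⟩, hx⟩ := IsLocalizedModule.surj M lX x'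
      have hx : (t' : R) • x' = lX x := hx
      refine ⟨(N.mkQ (x, (t' : R) • v), t' * s * t), ?_⟩
      change ((t' * s * t : M) : R) • b = h (N.mkQ (x, (t' : R) • v))
      rw [hh, ← hx, map_smul, hx', map_smul, smul_sub, smul_comm (s : R) (t' : R) (φ v)]
      simp [mul_smul]
    · have key : ∀ z, h z = 0 → ∃ c : M, c • z = 0 := by
        intro z hz
        obtain ⟨⟨x, v⟩, rfl⟩ := N.mkQ_surjective z
        have h1 : lY (π v) = 0 := by
          apply hunitY s
          have := congrArg g hz
          rw [hh, map_add, (hfg _).2 ⟨_, rfl⟩, map_smul, hφ', map_zero, zero_add] at this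
          exact this
        obtain ⟨c, hc⟩ := (IsLocalizedModule.eq_zero_iff M lY).1 h1
        have hc : π ((c : R) • v) = 0 := by rw [map_smul]; exact hc
        have h2 : N.mkQ ((c : R) • (x, v)) = N.mkQ ((c : R) • x + α ⟨_, hc⟩, 0) := by
          rw [eq_comm, ← sub_eq_zero, ← map_sub, Submodule.mkQ_apply,
            Submodule.Quotient.mk_eq_zero]
          have : ((c : R) • x + α ⟨_, hc⟩, (0 : Fin n → R)) - (c : R) • (x, v)
            = (α ⟨_, hc⟩, -((c : R) • v)) := by simp
          rw [this]
          exact (hN _ _).2 ⟨⟨_, hc⟩, rfl, rfl⟩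
        have h3 : lX ((c : R) • x + α ⟨_, hc⟩) = 0 := by
          apply hf
          have := hh ((c : R) • x + α ⟨_, hc⟩) 0
          rw [← h2, map_smul, map_smul, hz] at this
          simpa using this.symm
        obtain ⟨c', hc'⟩ := (IsLocalizedModule.eq_zero_iff M lX).1 h3
        have hc' : (c' : R) • ((c : R) • x + α ⟨_, hc⟩) = 0 := hc'
        refine ⟨c' * c, ?_⟩
        change ((c' * c : M) : R) • N.mkQ (x, v) = 0
        rw [Submonoid.coe_mul, mul_smul, ← map_smul N.mkQ, h2, ← map_smul, Prod.smul_mk, hc',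
          smul_zero]
        exact map_zero _
      intro z₁ z₂ hz
      obtain ⟨c, hc⟩ := key (z₁ - z₂) (by rw [map_sub, hz, sub_self])
      exact ⟨c, by rwa [smul_sub, sub_eq_zero] at hc⟩

lemma split_aux {A K P G : Type} [CommRing A] [AddCommGroup K] [AddCommGroup P] [AddCommGroup G]
    [Module A K] [Module A P] [Module A G] [Module.Projective A G]
    (κ : K →ₗ[A] P) (ρ : P →ₗ[A] G) (hκ : Function.Injective κ) (hρ : Function.Surjective ρ)
    (hex : Function.Exact κ ρ) : Nonempty (P ≃ₗ[A] K × G) := by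
  obtain ⟨l, hl⟩ := Module.projective_lifting_property ρ LinearMap.id hρ
  exact ⟨(hex.splitSurjectiveEquiv hκ ⟨l, hl⟩).1⟩

lemma pi_mem_aux (R : Type) [CommRing R] (S : Set (ModuleCat.{0} R))
    (hR : ModuleCat.of R R ∈ S)
    (hsummand : ∀ A B C : ModuleCat.{0} R, A ∈ S →
      Nonempty (A ≃ₗ[R] (↥B × ↥C)) → B ∈ S)
    (hext : ∀ (A B C : ModuleCat.{0} R) (f : A →ₗ[R] B) (g : B →ₗ[R] C),
      Function.Injective f → Function.Surjective g →
      LinearMap.range f = LinearMap.ker g → A ∈ S → C ∈ S → B ∈ S)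
    (k : ℕ) (Xs : Fin k → ModuleCat.{0} R) (hXs : ∀ i, Xs i ∈ S) :
    ModuleCat.of R (Π i, Xs i) ∈ S := by
  induction k with
  | zero =>
    exact hsummand (ModuleCat.of R R) (ModuleCat.of R (Π i, Xs i)) (ModuleCat.of R R) hR
      ⟨(LinearEquiv.uniqueProd (R := R) (M := R) (M₂ := Π i : Fin 0, Xs i)).symm⟩
  | succ k ih =>
    refine hext (Xs 0) (ModuleCat.of R (Π i, Xs i))
      (ModuleCat.of R (Π i : Fin k, Xs i.succ))
      (LinearMap.single R (fun i => Xs i) 0) (LinearMap.pi fun i => LinearMap.proj i.succ)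
      ?_ ?_ ?_ (hXs 0) (ih (fun i => Xs i.succ) fun i => hXs _)
    · exact Pi.single_injective (M := fun i => Xs i) 0
    · intro y
      exact ⟨Fin.cons (α := fun i => Xs i) 0 y, by ext i; simp⟩
    · ext z
      constructor
      · rintro ⟨x, rfl⟩
        ext i
        simp
        rfl
      · intro h
        refine ⟨z 0, ?_⟩
        ext i
        refine Fin.cases ?_ (fun j => ?_) i
        · simp
        · have : z j.succ = 0 := congrFun h j
          simp [this]

/-- if `S` is a resolving subcategory of finitely generated
`R`-modules, then for every prime `p` the additive closure
`add_{R_p}(S_p)` is a resolving subcategory of finitely generated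
`R_p`-modules: it contains `R_p` and is closed under direct summands,
extensions and syzygies. -/
theorem addLocalized_resolving
    (R : Type) [CommRing R] [IsLocalRing R] [IsNoetherianRing R]
    (S : Set (ModuleCat.{0} R))
    (hfg : ∀ A ∈ S, Module.Finite R ↥A)
    (hiso : ∀ A B : ModuleCat.{0} R, A ∈ S → Nonempty (A ≃ₗ[R] B) → B ∈ S)
    (hR : ModuleCat.of R R ∈ S)
    (hsummand : ∀ A B C : ModuleCat.{0} R, A ∈ S →
      Nonempty (A ≃ₗ[R] (↥B × ↥C)) → B ∈ S)
    (hext : ∀ (A B C : ModuleCat.{0} R) (f : A →ₗ[R] B) (g : B →ₗ[R] C),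
      Function.Injective f → Function.Surjective g →
      LinearMap.range f = LinearMap.ker g → A ∈ S → C ∈ S → B ∈ S)
    (hker : ∀ (A B C : ModuleCat.{0} R) (f : A →ₗ[R] B) (g : B →ₗ[R] C),
      Function.Injective f → Function.Surjective g →
      LinearMap.range f = LinearMap.ker g → B ∈ S → C ∈ S → A ∈ S)
    (p : Ideal R) [p.IsPrime] :
    (ModuleCat.of (Localization p.primeCompl) (Localization p.primeCompl)
      ∈ addLocalized R p S) ∧
    (∀ A B C : ModuleCat.{0} (Localization p.primeCompl),
      A ∈ addLocalized R p S →
      Nonempty (A ≃ₗ[Localization p.primeCompl] (↥B × ↥C)) →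
      B ∈ addLocalized R p S) ∧
    (∀ (A B C : ModuleCat.{0} (Localization p.primeCompl))
      (f : A →ₗ[Localization p.primeCompl] B)
      (g : B →ₗ[Localization p.primeCompl] C),
      Function.Injective f → Function.Surjective g →
      LinearMap.range f = LinearMap.ker g →
      A ∈ addLocalized R p S → C ∈ addLocalized R p S →
      B ∈ addLocalized R p S) ∧
    (∀ A ∈ addLocalized R p S,
      ∀ K : ModuleCat.{0} (Localization p.primeCompl),
        IsSyzygyOf (Localization p.primeCompl) K A →
        K ∈ addLocalized R p S) := by
  have hpi : ∀ (k : ℕ) (Xs : Fin k → ModuleCat.{0} R), (∀ i, Xs i ∈ S) →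
      ModuleCat.of R (Π i, Xs i) ∈ S := pi_mem_aux R S hR hsummand hext
  have hfree : ∀ n : ℕ, ModuleCat.of R (Fin n → R) ∈ S := fun n =>
    hpi n (fun _ => ModuleCat.of R R) (fun _ => hR)
  have hin : ∀ (X : ModuleCat.{0} R) (N L : ModuleCat.{0} (Localization p.primeCompl)),
      X ∈ S → (LocalizedModule p.primeCompl X ≃ₗ[Localization p.primeCompl] (N × L)) →
      N ∈ addLocalized R p S := by
    intro X N L hX e
    exact ⟨1, fun _ => X, fun _ => hX, L,
      ⟨(LinearEquiv.funUnique (Fin 1) (Localization p.primeCompl)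
        (LocalizedModule p.primeCompl X)).trans e⟩⟩
  have hin' : ∀ (X : ModuleCat.{0} R) (N : ModuleCat.{0} (Localization p.primeCompl)),
      X ∈ S → (LocalizedModule p.primeCompl X ≃ₗ[Localization p.primeCompl] N) →
      N ∈ addLocalized R p S := by
    intro X N hX e
    exact hin X N (ModuleCat.of _ PUnit) hX (e.trans
      (LinearEquiv.prodUnique (R := Localization p.primeCompl) (M := N) (M₂ := PUnit)).symm)
  have hout : ∀ N ∈ addLocalized R p S, ∃ X ∈ S,
      ∃ L : ModuleCat.{0} (Localization p.primeCompl),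
      Nonempty (LocalizedModule p.primeCompl X ≃ₗ[Localization p.primeCompl] (N × L)) := by
    rintro N ⟨k, Xs, hXs, L, ⟨e⟩⟩
    have e₀ : LocalizedModule p.primeCompl (Π i, Xs i) ≃ₗ[Localization p.primeCompl]
        (Π i, LocalizedModule p.primeCompl (Xs i)) := LinearEquiv.extendScalarsOfIsLocalization p.primeCompl (Localization p.primeCompl)
      (IsLocalizedModule.iso p.primeCompl
        (LinearMap.pi fun i => LocalizedModule.mkLinearMap p.primeCompl (Xs i) ∘ₗ
          LinearMap.proj i))
    exact ⟨_, hpi k Xs hXs, L, ⟨e₀.trans e⟩⟩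
  have hfreeP : ∀ n : ℕ, ModuleCat.of (Localization p.primeCompl)
      (Fin n → Localization p.primeCompl) ∈ addLocalized R p S := by
    intro n
    refine hin' (ModuleCat.of R (Fin n → R)) _ (hfree n) ?_
    exact LinearEquiv.extendScalarsOfIsLocalization p.primeCompl (Localization p.primeCompl)
      (IsLocalizedModule.iso p.primeCompl
        (LinearMap.pi fun i : Fin n => Algebra.linearMap R (Localization p.primeCompl) ∘ₗ
          LinearMap.proj i))
  have hsumP : ∀ A B C : ModuleCat.{0} (Localization p.primeCompl),
      A ∈ addLocalized R p S →
      Nonempty (A ≃ₗ[Localization p.primeCompl] (↥B × ↥C)) →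
      B ∈ addLocalized R p S := by
    rintro A B C hA ⟨e⟩
    obtain ⟨X, hX, L, ⟨e'⟩⟩ := hout A hA
    exact hin X B (ModuleCat.of _ (C × L)) hX
      (e'.trans ((e.prodCongr (LinearEquiv.refl _ _)).trans (LinearEquiv.prodAssoc _ _ _ _)))
  have hextP : ∀ (A B C : ModuleCat.{0} (Localization p.primeCompl))
      (f : A →ₗ[Localization p.primeCompl] B)
      (g : B →ₗ[Localization p.primeCompl] C),
      Function.Injective f → Function.Surjective g →
      LinearMap.range f = LinearMap.ker g →
      A ∈ addLocalized R p S → C ∈ addLocalized R p S →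
      B ∈ addLocalized R p S := by
    intro A B C f g hf hg hex hA hC
    obtain ⟨X, hX, A', ⟨eA⟩⟩ := hout A hA
    obtain ⟨Y, hY, C', ⟨eC⟩⟩ := hout C hC
    let f' : LocalizedModule p.primeCompl X →ₗ[Localization p.primeCompl] B × (A' × C') :=
      (f.prodMap (LinearMap.inl _ A' C')) ∘ₗ eA.toLinearMap
    let g' : B × (A' × C') →ₗ[Localization p.primeCompl] LocalizedModule p.primeCompl Y :=
      eC.symm.toLinearMap ∘ₗ (g.prodMap (LinearMap.snd _ A' C'))
    have hf' : Function.Injective f' := by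
      have h1 : Function.Injective
          (Prod.map f (LinearMap.inl (Localization p.primeCompl) A' C')) :=
        Function.Injective.prodMap hf LinearMap.inl_injective
      exact h1.comp eA.injective
    have hg' : Function.Surjective g' := by
      refine eC.symm.surjective.comp ?_
      exact Function.Surjective.prodMap hg Prod.snd_surjective
    have hfg' : Function.Exact f' g' := by
      rintro ⟨b, a, c⟩
      constructor
      · intro h
        have h : (g b, c) = (0 : C × C') := eC.symm.injective (by rw [map_zero]; exact h)
        have h1 : g b = 0 := congrArg Prod.fst h
        have h2 : c = 0 := congrArg Prod.snd h
        have h3 : b ∈ LinearMap.range f := by rw [hex]; exact h1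
        obtain ⟨a0, rfl⟩ := h3
        refine ⟨eA.symm (a0, a), ?_⟩
        simp [f', h2]
      · rintro ⟨x, hx⟩
        have h1 : f (eA x).1 = b := congrArg Prod.fst hx
        have h2 : (0 : C') = c := congrArg (fun z => z.2.2) hx
        have h3 : g b = 0 := by
          have : b ∈ LinearMap.ker g := by rw [← hex]; exact ⟨_, h1⟩
          exact this
        change eC.symm (g b, c) = 0
        rw [h3, ← h2]
        exact map_zero _
    let : Module R (B × (A' × C')) :=
      Module.compHom _ (algebraMap R (Localization p.primeCompl))
    have : IsScalarTower R (Localization p.primeCompl) (B × (A' × C')) :=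
      IsScalarTower.of_algebraMap_smul fun r x => rfl
    have hB : ∀ x : p.primeCompl,
        IsUnit (algebraMap R (Module.End R (B × (A' × C'))) x) := by
      intro x
      have := (IsLocalization.map_units (Localization p.primeCompl) x).map
        (Algebra.lsmul R R (B × (A' × C')) (A := Localization p.primeCompl))
      convert this
      ext1 b
      simp
    have := hfg Y hY
    obtain ⟨Z, _, _, i, q, h, hi, hq, hiq, hh⟩ := ext_lift_aux p.primeCompl
      (LocalizedModule.mkLinearMap p.primeCompl X) (LocalizedModule.mkLinearMap p.primeCompl Y)
      hB (f'.restrictScalars R) (g'.restrictScalars R) hf' hg' hfg'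
    have hZ : ModuleCat.of R Z ∈ S := hext X (ModuleCat.of R Z) Y i q hi hq hiq hX hY
    refine hin (ModuleCat.of R Z) B (ModuleCat.of _ (A' × C')) hZ ?_
    exact LinearEquiv.extendScalarsOfIsLocalization p.primeCompl (Localization p.primeCompl)
      (IsLocalizedModule.iso p.primeCompl h)
  refine ⟨?_, hsumP, hextP, ?_⟩
  · exact hin' (ModuleCat.of R R) _ hR
      (LinearEquiv.extendScalarsOfIsLocalization p.primeCompl (Localization p.primeCompl)
      (IsLocalizedModule.iso p.primeCompl (Algebra.linearMap R (Localization p.primeCompl))))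
  · rintro A hA K ⟨n, f, hf, -, ⟨eK⟩⟩
    obtain ⟨X, hX, A', ⟨e⟩⟩ := hout A hA
    have hA' : A' ∈ addLocalized R p S :=
      hin X A' A hX (e.trans (LinearEquiv.prodComm _ _ _))
    have := hfg X hX
    obtain ⟨m, π, hπ⟩ := Module.Finite.exists_fin' R X
    have hY : ModuleCat.of R (LinearMap.ker π) ∈ S :=
      hker (ModuleCat.of R (LinearMap.ker π)) (ModuleCat.of R (Fin m → R)) X
        (LinearMap.ker π).subtype π (Submodule.subtype_injective _) hπ
        (Submodule.range_subtype _) (hfree m) hX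
    have hYP : ModuleCat.of (Localization p.primeCompl)
        (LocalizedModule p.primeCompl (LinearMap.ker π)) ∈ addLocalized R p S :=
      hin' (ModuleCat.of R (LinearMap.ker π)) _ hY (LinearEquiv.refl _ _)
    let πP := LocalizedModule.map p.primeCompl π
    let ιP := LocalizedModule.map p.primeCompl (LinearMap.ker π).subtype
    have hπP : Function.Surjective πP := LocalizedModule.map_surjective _ _ hπ
    have hιP : Function.Injective ιP :=
      LocalizedModule.map_injective _ _ (Submodule.subtype_injective _)
    have hex : Function.Exact ιP πP := LocalizedModule.map_exact p.primeCompl _ _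
      (LinearMap.exact_subtype_ker_map π)
    have hAF : ModuleCat.of (Localization p.primeCompl)
        (A' × (Fin n → Localization p.primeCompl)) ∈ addLocalized R p S :=
      hextP A' (ModuleCat.of (Localization p.primeCompl)
        (A' × (Fin n → Localization p.primeCompl)))
        (ModuleCat.of (Localization p.primeCompl) (Fin n → Localization p.primeCompl))
        (LinearMap.inl _ _ _) (LinearMap.snd _ _ _) LinearMap.inl_injective
        LinearMap.snd_surjective (LinearMap.range_inl _ _ _) hA' (hfreeP n)
    let G := LocalizedModule p.primeCompl (Fin m → R)
    let F := Fin n → Localization p.primeCompl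
    let d : F × G →ₗ[Localization p.primeCompl] A :=
      f ∘ₗ LinearMap.fst _ F G -
        LinearMap.fst _ A A' ∘ₗ e.toLinearMap ∘ₗ πP ∘ₗ LinearMap.snd _ F G
    have hd : ∀ v u, (v, u) ∈ LinearMap.ker d ↔ f v = (e (πP u)).1 := by
      intro v u
      rw [LinearMap.mem_ker]
      exact sub_eq_zero (a := f v) (b := (e (πP u)).1)
    have hιd : ∀ y, LinearMap.inr (Localization p.primeCompl) F G (ιP y) ∈ LinearMap.ker d := by
      intro y
      have : πP (ιP y) = 0 := (hex _).2 ⟨y, rfl⟩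
      refine (hd 0 (ιP y)).2 ?_
      rw [this]
      simp
    have hP : ModuleCat.of (Localization p.primeCompl) (LinearMap.ker d)
        ∈ addLocalized R p S := by
      refine hextP _ (ModuleCat.of (Localization p.primeCompl) (LinearMap.ker d)) _
        ((LinearMap.inr _ F G ∘ₗ ιP).codRestrict (LinearMap.ker d) hιd)
        (((LinearMap.snd _ A A' ∘ₗ e.toLinearMap ∘ₗ πP ∘ₗ LinearMap.snd _ F G).prod
          (LinearMap.fst _ F G)) ∘ₗ (LinearMap.ker d).subtype) ?_ ?_ ?_ hYP hAF
      · intro y y' h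
        have h1 := congrArg (fun z : LinearMap.ker d => (z : F × G).2) h
        exact hιP h1
      · rintro ⟨a, v⟩
        obtain ⟨u, hu⟩ := hπP (e.symm (f v, a))
        refine ⟨⟨(v, u), (hd _ _).2 (by rw [hu]; simp)⟩, ?_⟩
        change ((e (πP u)).2, v) = (a, v)
        rw [hu]; simp
      · ext ⟨⟨v, u⟩, hz⟩
        have hz' := (hd _ _).1 hz
        constructor
        · rintro ⟨y, hy⟩
          have hy := congrArg (fun z : LinearMap.ker d => (z : F × G)) hy
          have h1 : (0 : F) = v := congrArg Prod.fst hy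
          have h2 : ιP y = u := congrArg Prod.snd hy
          have h3 : πP u = 0 := (hex _).2 ⟨y, h2⟩
          change ((e (πP u)).2, v) = 0
          rw [h3, ← h1]; simp
        · intro h
          have h : ((e (πP u)).2, v) = (0 : A' × F) := h
          have h1 : (e (πP u)).2 = 0 := congrArg Prod.fst h
          have h2 : v = 0 := congrArg Prod.snd h
          have h3 : πP u = 0 := by
            apply e.injective
            rw [map_zero]
            refine Prod.ext ?_ h1
            rw [← hz', h2, map_zero]; rfl
          obtain ⟨y, hy⟩ := (hex _).1 h3
          refine ⟨y, ?_⟩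
          apply Subtype.ext
          change ((0 : F), ιP y) = (v, u)
          rw [h2, hy]
    have hκd : ∀ y : LinearMap.ker f,
        (LinearMap.inl (Localization p.primeCompl) F G (y : F)) ∈ LinearMap.ker d := by
      intro y
      refine (hd (y : F) 0).2 ?_
      rw [LinearMap.mem_ker.1 y.2]
      simp
    let κ : LinearMap.ker f →ₗ[Localization p.primeCompl] LinearMap.ker d :=
      (LinearMap.inl _ F G ∘ₗ (LinearMap.ker f).subtype).codRestrict (LinearMap.ker d) hκd
    let ρ : LinearMap.ker d →ₗ[Localization p.primeCompl] G :=
      LinearMap.snd _ F G ∘ₗ (LinearMap.ker d).subtype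
    have hκ : Function.Injective κ := by
      intro y y' h
      have h1 := congrArg (fun z : LinearMap.ker d => (z : F × G).1) h
      exact Subtype.ext h1
    have hρ : Function.Surjective ρ := by
      intro u
      obtain ⟨v, hv⟩ := hf (e (πP u)).1
      exact ⟨⟨(v, u), (hd _ _).2 hv⟩, rfl⟩
    have hκρ : Function.Exact κ ρ := by
      rintro ⟨⟨v, u⟩, hz⟩
      have hz' := (hd _ _).1 hz
      constructor
      · intro h
        have h : u = 0 := h
        have hv : f v = 0 := by rw [hz', h]; simp
        refine ⟨⟨v, hv⟩, ?_⟩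
        apply Subtype.ext
        change (v, (0 : G)) = (v, u)
        rw [h]
      · rintro ⟨y, hy⟩
        have hy := congrArg (fun z : LinearMap.ker d => (z : F × G).2) hy
        exact hy.symm
    have hsp : Nonempty (LinearMap.ker d ≃ₗ[Localization p.primeCompl] LinearMap.ker f × G) :=
      split_aux (A := Localization p.primeCompl) (K := LinearMap.ker f)
        (P := LinearMap.ker d) (G := LocalizedModule p.primeCompl (Fin m → R))
        κ ρ hκ hρ hκρ
    obtain ⟨e'⟩ := hsp
    exact hsumP _ K (ModuleCat.of _ G) hP
      ⟨e'.trans (eK.symm.prodCongr (LinearEquiv.refl _ _))⟩
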